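/- Let c ≥ 1, let p be a nonnegative integer, and for each multi-index α with |α| ≤ p let μ_α be a complex Radon measure on [−c,c]². Define φ(x,y) = Σ_{|α|≤p} (x,y)^α ∫_{[−c,c]²} e^{i(ξ₁x + ξ₂y)} dμ_α(ξ₁,ξ₂) and set M = max_{|α|≤p} |μ_α|([−c,c]²), where |μ_α| denotes the total variation. Then there exists a constant C(p), depending only on p, such that for all nonnegative integers m, n: (i) if min{m,n} ≥ p, then |∫_{−1}^{1}∫_{−1}^{1} φ(x,y) P_m(x) P_n(y) dx dy| ≤ C(p) · M · (c/2)^{m+n+p} / (Γ(m−p+1) Γ(n−p+1)); and (ii) if p' := max{m,n} ≥ p, then |∫_{−1}^{1}∫_{−1}^{1} φ(x,y) P_m(x) P_n(y) dx dy| ≤ C(p) · M · (c/2)^{p'+p} / Γ(p'−p+1). -/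

import Mathlib

open MeasureTheory Real

noncomputable section

/-- The Legendre polynomial of degree `n`, via Rodrigues' formula. -/
def legendreP (n : ℕ) (x : ℝ) : ℝ :=
  (1 / (2 ^ n * (n.factorial : ℝ))) * iteratedDeriv n (fun t : ℝ => (t ^ 2 - 1) ^ n) x

/-- The multi-indices `α = (α₁,α₂)` with `|α| ≤ p`. -/
def multiIdx (p : ℕ) : Finset (ℕ × ℕ) :=
  (Finset.range (p + 1) ×ˢ Finset.range (p + 1)).filter (fun α : ℕ × ℕ => α.1 + α.2 ≤ p)

/-! Rodrigues' formula and `n` integrations by parts move all derivatives onto the other factor, so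
`∫ P_n f` is at most `2 sup |f⁽ⁿ⁾| / (2ⁿ n!)`. For `f(x) = xᵃ e^{itx}` with `|t| ≤ c`, Leibniz' rule
bounds this by `2ᵃ⁺¹ (c/2)ⁿ / (n - a)!`. Taking `f = P_n` instead gives `∫ P_n² ≤ 2`, hence
`∫ |P_n| ≤ 2`, a bound uniform in `n` for the factor of lower degree. By Fubini, the Legendre
coefficient of each summand of `φ` is the integral of a product of two such one-dimensional
integrals against `μ_α`. -/

open Set Polynomial
open scoped Finset

section IntegrationByParts

variable {E : Type*} [NormedAddCommGroup E] [NormedSpace ℝ E] [CompleteSpace E]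

lemma integral_iteratedDeriv_smul_eq {u : ℝ → ℝ} {f : ℝ → E} {a b : ℝ} {n : ℕ}
    (hu : ContDiff ℝ n u) (hf : ContDiff ℝ n f) (ha : ∀ k < n, iteratedDeriv k u a = 0)
    (hb : ∀ k < n, iteratedDeriv k u b = 0) :
    ∫ x in a..b, iteratedDeriv n u x • f x =
      (-1 : ℝ) ^ n • ∫ x in a..b, u x • iteratedDeriv n f x := by
  induction n generalizing f with
  | zero => simp
  | succ n ih =>
    have hu' : ContDiff ℝ 1 (iteratedDeriv n u) := by
      rw [iteratedDeriv_eq_iterate]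
      exact ContDiff.iterate_deriv' 1 n (by simpa [add_comm] using hu)
    obtain ⟨hf_diff, -, hf'⟩ := (contDiff_succ_iff_deriv (n := n)).1 (by exact_mod_cast hf)
    have parts : ∫ x in a..b, iteratedDeriv n u x • deriv f x =
        -∫ x in a..b, iteratedDeriv (n + 1) u x • f x := by
      rw [intervalIntegral.integral_smul_deriv_eq_deriv_smul
        (fun x _ ↦ (hu'.differentiable one_ne_zero x).hasDerivAt)
        (fun x _ ↦ (hf_diff x).hasDerivAt)
        ((hu'.continuous_deriv le_rfl).intervalIntegrable _ _)
        (hf'.continuous.intervalIntegrable _ _), ha n n.lt_succ_self, hb n n.lt_succ_self]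
      simp [iteratedDeriv_succ]
    have ih' := ih (hu.of_le (by exact_mod_cast n.le_succ)) hf'
      (fun k hk ↦ ha k (hk.trans n.lt_succ_self)) (fun k hk ↦ hb k (hk.trans n.lt_succ_self))
    rw [iteratedDeriv_succ' (f := f), pow_succ, mul_smul, smul_comm, ← ih', parts]
    simp

end IntegrationByParts

section PolynomialDerivatives

open scoped Nat

lemma iteratedDeriv_polynomial_eval {𝕜 : Type*} [NontriviallyNormedField 𝕜] (q : 𝕜[X]) (n : ℕ) :
    iteratedDeriv n (fun x ↦ q.eval x) = fun x ↦ (derivative^[n] q).eval x := by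
  induction n with
  | zero => simp
  | succ n ih =>
    ext x
    rw [iteratedDeriv_succ, ih, Polynomial.deriv, Function.iterate_succ_apply']

lemma iterate_derivative_natDegree {R : Type*} [CommSemiring R] (q : R[X]) :
    derivative^[q.natDegree] q = C (q.natDegree ! * q.leadingCoeff) := by
  have h : (derivative^[q.natDegree] q).natDegree = 0 := by
    have := natDegree_iterate_derivative q q.natDegree
    omega
  rw [eq_C_of_natDegree_eq_zero h, coeff_iterate_derivative]
  simp [Nat.descFactorial_self]

end PolynomialDerivatives

section Legendre

open scoped Nat

lemma iteratedDeriv_sq_sub_one_pow (n k : ℕ) :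
    iteratedDeriv k (fun t : ℝ ↦ (t ^ 2 - 1) ^ n) =
      fun t ↦ (derivative^[k] ((X ^ 2 - 1 : ℝ[X]) ^ n)).eval t := by
  rw [← iteratedDeriv_polynomial_eval]
  simp

lemma iteratedDeriv_sq_sub_one_pow_eq_zero {n k : ℕ} (hk : k < n) {x : ℝ} (hx : x ^ 2 = 1) :
    iteratedDeriv k (fun t : ℝ ↦ (t ^ 2 - 1) ^ n) x = 0 := by
  obtain ⟨r, hr⟩ : (X ^ 2 - 1 : ℝ[X]) ∣ derivative^[k] ((X ^ 2 - 1) ^ n) :=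
    (dvd_pow_self _ (Nat.sub_ne_zero_of_lt hk)).trans (pow_sub_dvd_iterate_derivative_pow _ n k)
  simp [iteratedDeriv_sq_sub_one_pow, hr, hx]

lemma iteratedDeriv_two_mul_sq_sub_one_pow (n : ℕ) (x : ℝ) :
    iteratedDeriv (2 * n) (fun t : ℝ ↦ (t ^ 2 - 1) ^ n) x = ((2 * n)! : ℝ) := by
  have monic : (X ^ 2 - 1 : ℝ[X]).Monic := monic_X_pow_sub_C 1 two_ne_zero
  have degree : ((X ^ 2 - 1 : ℝ[X]) ^ n).natDegree = 2 * n := by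
    rw [monic.natDegree_pow, ← C_1, natDegree_X_pow_sub_C, mul_comm]
  have h := iterate_derivative_natDegree ((X ^ 2 - 1 : ℝ[X]) ^ n)
  rw [degree, (monic.pow n).leadingCoeff, mul_one] at h
  simp only [iteratedDeriv_sq_sub_one_pow, h, eval_C]

lemma contDiff_legendreP (n : ℕ) {k : ℕ∞} : ContDiff ℝ k (legendreP n) := by
  unfold legendreP
  rw [iteratedDeriv_sq_sub_one_pow]
  exact contDiff_const.mul (contDiff_aeval _ _)

@[fun_prop]
lemma continuous_legendreP (n : ℕ) : Continuous (legendreP n) :=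
  (contDiff_legendreP n (k := 0)).continuous

lemma iteratedDeriv_legendreP (n : ℕ) (x : ℝ) :
    iteratedDeriv n (legendreP n) x = ((2 * n)! / (2 ^ n * n !) : ℝ) := by
  have h : iteratedDeriv n (iteratedDeriv n fun t : ℝ ↦ (t ^ 2 - 1) ^ n) x = ((2 * n)! : ℝ) := by
    rw [← iteratedDeriv_two_mul_sq_sub_one_pow n x, two_mul]
    simp only [iteratedDeriv_eq_iterate, Function.iterate_add_apply]
  unfold legendreP
  rw [iteratedDeriv_const_mul_field, h, one_div_mul_eq_div]

lemma norm_integral_legendreP_smul_le {E : Type*} [NormedAddCommGroup E] [NormedSpace ℝ E]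
    [CompleteSpace E] {n : ℕ} {f : ℝ → E} {B : ℝ} (hf : ContDiff ℝ n f)
    (hB : ∀ x ∈ Icc (-1 : ℝ) 1, ‖iteratedDeriv n f x‖ ≤ B) :
    ‖∫ x in (-1 : ℝ)..1, legendreP n x • f x‖ ≤ 2 * B / (2 ^ n * n !) := by
  have rodrigues : ∫ x in (-1 : ℝ)..1, legendreP n x • f x =
      (1 / (2 ^ n * n ! : ℝ)) • (-1 : ℝ) ^ n •
        ∫ x in (-1 : ℝ)..1, (x ^ 2 - 1) ^ n • iteratedDeriv n f x := by
    rw [← integral_iteratedDeriv_smul_eq (by fun_prop) hf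
      (fun k hk ↦ iteratedDeriv_sq_sub_one_pow_eq_zero hk (by norm_num))
      (fun k hk ↦ iteratedDeriv_sq_sub_one_pow_eq_zero hk (by norm_num)),
      ← intervalIntegral.integral_smul]
    simp only [legendreP, mul_smul]
  have bound : ‖∫ x in (-1 : ℝ)..1, (x ^ 2 - 1) ^ n • iteratedDeriv n f x‖ ≤ B * |1 - -1| := by
    refine intervalIntegral.norm_integral_le_of_norm_le_const fun x hx ↦ ?_
    rw [uIoc_of_le (by norm_num)] at hx
    have weight : |x ^ 2 - 1| ^ n ≤ 1 :=
      pow_le_one₀ (abs_nonneg _) (abs_le.2 ⟨by nlinarith, by nlinarith [hx.1, hx.2]⟩)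
    rw [norm_smul, norm_pow, Real.norm_eq_abs]
    exact (mul_le_of_le_one_left (norm_nonneg _) weight).trans (hB x (Ioc_subset_Icc_self hx))
  calc ‖∫ x in (-1 : ℝ)..1, legendreP n x • f x‖
      = 1 / (2 ^ n * n !) * ‖∫ x in (-1 : ℝ)..1, (x ^ 2 - 1) ^ n • iteratedDeriv n f x‖ := by
        rw [rodrigues, norm_smul, norm_smul, norm_pow, norm_neg, norm_one, one_pow, one_mul,
          Real.norm_of_nonneg (by positivity)]
    _ ≤ 1 / (2 ^ n * n !) * (B * |1 - -1|) := by gcongr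
    _ = 2 * B / (2 ^ n * n !) := by norm_num; ring

lemma integral_legendreP_sq_le_two (n : ℕ) : ∫ x in (-1 : ℝ)..1, legendreP n x ^ 2 ≤ 2 := by
  have factorial_eq : ((2 * n)! : ℝ) = n.centralBinom * n ! * n ! := by
    have h := Nat.choose_mul_factorial_mul_factorial (Nat.le_mul_of_pos_left n two_pos)
    rw [← Nat.centralBinom_eq_two_mul_choose, two_mul, Nat.add_sub_cancel, ← two_mul] at h
    exact_mod_cast h.symm
  have h := norm_integral_legendreP_smul_le (contDiff_legendreP n (k := n))
    fun x _ ↦ (by rw [iteratedDeriv_legendreP, Real.norm_of_nonneg (by positivity)])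
  calc ∫ x in (-1 : ℝ)..1, legendreP n x ^ 2
      ≤ ‖∫ x in (-1 : ℝ)..1, legendreP n x • legendreP n x‖ := by
        simpa only [smul_eq_mul, sq] using Real.le_norm_self _
    _ ≤ 2 * ((2 * n)! / (2 ^ n * n !)) / (2 ^ n * n !) := h
    _ = 2 * (n.centralBinom / 4 ^ n) := by
        rw [factorial_eq, show (4 : ℝ) = 2 * 2 by norm_num, mul_pow]
        field_simp
    _ ≤ 2 := by
        have : (n.centralBinom : ℝ) ≤ 4 ^ n := mod_cast n.centralBinom_le_four_pow
        linarith [div_le_one_of_le₀ this (by positivity)]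

lemma integral_abs_legendreP_le_two (n : ℕ) : ∫ x in (-1 : ℝ)..1, |legendreP n x| ≤ 2 := by
  have amgm (x : ℝ) : |legendreP n x| ≤ 1 / 2 + 1 / 2 * legendreP n x ^ 2 := by
    nlinarith [sq_nonneg (|legendreP n x| - 1), sq_abs (legendreP n x)]
  calc ∫ x in (-1 : ℝ)..1, |legendreP n x|
      ≤ ∫ x in (-1 : ℝ)..1, (1 / 2 + 1 / 2 * legendreP n x ^ 2) :=
        intervalIntegral.integral_mono (by norm_num)
          (Continuous.intervalIntegrable (by fun_prop) _ _)
          (Continuous.intervalIntegrable (by fun_prop) _ _) amgm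
    _ = 1 + 1 / 2 * ∫ x in (-1 : ℝ)..1, legendreP n x ^ 2 := by
        rw [intervalIntegral.integral_add (by simp)
          (Continuous.intervalIntegrable (by fun_prop) _ _), intervalIntegral.integral_const_mul]
        norm_num
    _ ≤ 2 := by linarith [integral_legendreP_sq_le_two n]

end Legendre

section LeibnizBound

open scoped Nat

lemma choose_mul_descFactorial_comm (m n k : ℕ) :
    m.choose k * n.descFactorial k = n.choose k * m.descFactorial k := by
  simp only [Nat.descFactorial_eq_factorial_mul_choose]
  ring

lemma sum_choose_mul_descFactorial_mul_factorial_le (n a : ℕ) :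
    (∑ k ∈ Finset.range (n + 1), n.choose k * a.descFactorial k) * (n - a)! ≤ 2 ^ a * n ! := by
  have term_le : ∀ k ∈ Finset.range (n + 1),
      n.choose k * a.descFactorial k * (n - a)! ≤ a.choose k * n ! := by
    intro k hk
    rcases le_or_gt k a with hka | hak
    · rw [choose_mul_descFactorial_comm, mul_assoc,
        ← Nat.factorial_mul_descFactorial (Finset.mem_range_succ_iff.1 hk), mul_comm (n - k)!]
      gcongr
    · simp [Nat.descFactorial_of_lt hak]
  have sum_choose_le : ∑ k ∈ Finset.range (n + 1), a.choose k ≤ 2 ^ a := by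
    rw [← Nat.sum_range_choose]
    refine Finset.sum_le_sum_of_ne_zero fun k _ hk ↦ Finset.mem_range_succ_iff.2 ?_
    exact not_lt.1 (mt Nat.choose_eq_zero_of_lt hk)
  calc _ ≤ ∑ k ∈ Finset.range (n + 1), a.choose k * n ! := by
        rw [Finset.sum_mul]; exact Finset.sum_le_sum term_le
    _ ≤ 2 ^ a * n ! := by rw [← Finset.sum_mul]; gcongr

lemma norm_iteratedDeriv_pow_smul_le {E : Type*} [NormedAddCommGroup E] [NormedSpace ℝ E]
    {g : ℝ → E} {n : ℕ} {x B : ℝ} (a : ℕ) (hg : ContDiff ℝ n g) (hx : |x| ≤ 1)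
    (hB : ∀ k ≤ n, ‖iteratedDeriv k g x‖ ≤ B) :
    ‖iteratedDeriv n (fun y ↦ y ^ a • g y) x‖ ≤ 2 ^ a * n ! / (n - a)! * B := by
  have hB0 : 0 ≤ B := (norm_nonneg _).trans (hB n le_rfl)
  have leibniz := norm_iteratedFDeriv_smul_le (f := fun y : ℝ ↦ y ^ a) (by fun_prop) hg x le_rfl
  simp only [norm_iteratedFDeriv_eq_norm_iteratedDeriv, iteratedDeriv_pow] at leibniz
  calc ‖iteratedDeriv n (fun y ↦ y ^ a • g y) x‖
      ≤ ∑ k ∈ Finset.range (n + 1), (n.choose k * a.descFactorial k : ℕ) * B := by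
        refine leibniz.trans (Finset.sum_le_sum fun k _ ↦ ?_)
        have : |x| ^ (a - k) ≤ 1 := pow_le_one₀ (abs_nonneg x) hx
        rw [norm_mul, norm_pow, Real.norm_natCast, Real.norm_eq_abs, Nat.cast_mul]
        gcongr
        · exact mul_le_of_le_one_right (Nat.cast_nonneg _) this
        · exact hB _ (Nat.sub_le n k)
    _ ≤ 2 ^ a * n ! / (n - a)! * B := by
        rw [← Finset.sum_mul]
        gcongr
        rw [le_div_iff₀ (by positivity)]
        exact_mod_cast sum_choose_mul_descFactorial_mul_factorial_le n a

end LeibnizBound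

section LegendreFourier

open scoped Nat

lemma contDiff_cexp_mul_ofReal (z : ℂ) {n : ℕ∞} :
    ContDiff ℝ n fun x : ℝ ↦ Complex.exp (z * x) :=
  (contDiff_const.mul Complex.ofRealCLM.contDiff).cexp

lemma iteratedDeriv_cexp_mul_ofReal (z : ℂ) (k : ℕ) :
    iteratedDeriv k (fun x : ℝ ↦ Complex.exp (z * x)) =
      fun x : ℝ ↦ z ^ k * Complex.exp (z * x) := by
  induction k with
  | zero => simp
  | succ k ih =>
    ext x
    have h : HasDerivAt (fun y : ℝ ↦ z * y) (z * (1 : ℝ)) x :=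
      (hasDerivAt_id x).ofReal_comp.const_mul z
    rw [iteratedDeriv_succ, ih, (h.cexp.const_mul _).deriv, Complex.ofReal_one]
    ring

lemma norm_cexp_I_mul_ofReal_mul_ofReal (t x : ℝ) : ‖Complex.exp (Complex.I * t * x)‖ = 1 := by
  rw [mul_assoc, ← Complex.ofReal_mul, Complex.norm_exp_I_mul_ofReal]

/-- The function `P_n(x) xᵃ e^{itx}`, the one-variable factor of the integrand of a Legendre
coefficient of `φ`. -/
def legendreKernel (n a : ℕ) (t x : ℝ) : ℂ :=
  legendreP n x • x ^ a • Complex.exp (Complex.I * t * x)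

/-- The integral `∫ P_n(x) xᵃ e^{itx} dx` over `[-1, 1]`. The two-dimensional Legendre coefficients
are superpositions of products of two such integrals. -/
def legendreFourier (n a : ℕ) (t : ℝ) : ℂ :=
  ∫ x in (-1 : ℝ)..1, legendreKernel n a t x

lemma norm_legendreFourier_le_two (n a : ℕ) (t : ℝ) : ‖legendreFourier n a t‖ ≤ 2 := by
  refine le_trans ?_ (integral_abs_legendreP_le_two n)
  refine intervalIntegral.norm_integral_le_of_norm_le (by norm_num) (ae_of_all _ fun x hx ↦ ?_)
    (Continuous.intervalIntegrable (by fun_prop) _ _)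
  have : |x| ^ a ≤ 1 := pow_le_one₀ (abs_nonneg _) (abs_le.2 ⟨hx.1.le, hx.2⟩)
  rw [legendreKernel, norm_smul, norm_smul, norm_cexp_I_mul_ofReal_mul_ofReal, norm_pow, mul_one]
  exact mul_le_of_le_one_right (abs_nonneg _) this

variable {p a b : ℕ} {c s t : ℝ}

lemma norm_legendreFourier_le (n a : ℕ) (hc : 1 ≤ c) (ht : |t| ≤ c) :
    ‖legendreFourier n a t‖ ≤ 2 ^ (a + 1) * (c / 2) ^ n / (n - a)! := by
  have derivative_le (x : ℝ) (hx : x ∈ Icc (-1 : ℝ) 1) :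
      ‖iteratedDeriv n (fun y : ℝ ↦ y ^ a • Complex.exp (Complex.I * t * y)) x‖ ≤
        2 ^ a * n ! / (n - a)! * c ^ n := by
    refine norm_iteratedDeriv_pow_smul_le a (contDiff_cexp_mul_ofReal _) (abs_le.2 hx) fun k hk ↦ ?_
    rw [iteratedDeriv_cexp_mul_ofReal, norm_mul, norm_cexp_I_mul_ofReal_mul_ofReal, norm_pow,
      norm_mul, Complex.norm_I, Complex.norm_real, one_mul, mul_one]
    exact (pow_le_pow_left₀ (abs_nonneg t) ht k).trans (pow_le_pow_right₀ hc hk)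
  calc ‖legendreFourier n a t‖
      ≤ 2 * (2 ^ a * n ! / (n - a)! * c ^ n) / (2 ^ n * n !) :=
        norm_integral_legendreP_smul_le ((contDiff_id.pow a).smul (contDiff_cexp_mul_ofReal _))
          derivative_le
    _ = 2 ^ (a + 1) * (c / 2) ^ n / (n - a)! := by
        rw [div_pow, pow_succ]
        field_simp

lemma norm_legendreFourier_le_of_le (n : ℕ) (hap : a ≤ p) (hc : 1 ≤ c) (ht : |t| ≤ c) :
    ‖legendreFourier n a t‖ ≤ 2 ^ (a + 1) * (c / 2) ^ n / (n - p)! := by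
  refine (norm_legendreFourier_le n a hc ht).trans ?_
  gcongr

lemma div_two_pow_le (k p : ℕ) (hc : 1 ≤ c) : (c / 2) ^ k ≤ 2 ^ p * (c / 2) ^ (k + p) := by
  have : 1 ≤ 2 ^ p * (c / 2) ^ p := by
    rw [← mul_pow, mul_div_cancel₀ c two_ne_zero]
    exact one_le_pow₀ hc
  calc (c / 2) ^ k ≤ (2 ^ p * (c / 2) ^ p) * (c / 2) ^ k :=
        le_mul_of_one_le_left (by positivity) this
    _ = 2 ^ p * (c / 2) ^ (k + p) := by ring

lemma norm_legendreFourier_mul_le (m n : ℕ) (hab : a + b ≤ p) (hc : 1 ≤ c) (hs : |s| ≤ c)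
    (ht : |t| ≤ c) :
    ‖legendreFourier m a s‖ * ‖legendreFourier n b t‖ ≤
      4 ^ (p + 1) * (c / 2) ^ (m + n + p) / ((m - p)! * (n - p)!) := by
  calc ‖legendreFourier m a s‖ * ‖legendreFourier n b t‖
      ≤ (2 ^ (a + 1) * (c / 2) ^ m / (m - p)!) * (2 ^ (b + 1) * (c / 2) ^ n / (n - p)!) := by
        gcongr
        · exact norm_legendreFourier_le_of_le m (by omega) hc hs
        · exact norm_legendreFourier_le_of_le n (by omega) hc ht
    _ = 2 ^ (a + b + 2) * (c / 2) ^ (m + n) / ((m - p)! * (n - p)!) := by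
        rw [div_mul_div_comm]; ring
    _ ≤ 2 ^ (p + 2) * (2 ^ p * (c / 2) ^ (m + n + p)) / ((m - p)! * (n - p)!) := by
        gcongr
        · norm_num
        · exact div_two_pow_le _ p hc
    _ = 4 ^ (p + 1) * (c / 2) ^ (m + n + p) / ((m - p)! * (n - p)!) := by
        rw [show (4 : ℝ) = 2 * 2 by norm_num, mul_pow]; ring

lemma norm_legendreFourier_mul_le_left (m n b : ℕ) (t : ℝ) (hap : a ≤ p) (hc : 1 ≤ c)
    (hs : |s| ≤ c) :
    ‖legendreFourier m a s‖ * ‖legendreFourier n b t‖ ≤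
      4 ^ (p + 1) * (c / 2) ^ (m + p) / (m - p)! := by
  calc ‖legendreFourier m a s‖ * ‖legendreFourier n b t‖
      ≤ (2 ^ (a + 1) * (c / 2) ^ m / (m - p)!) * 2 := by
        gcongr
        · exact norm_legendreFourier_le_of_le m hap hc hs
        · exact norm_legendreFourier_le_two n b t
    _ ≤ (2 ^ (p + 1) * (2 ^ p * (c / 2) ^ (m + p)) / (m - p)!) * 2 := by
        gcongr
        · norm_num
        · exact div_two_pow_le m p hc
    _ = 4 ^ (p + 1) * (c / 2) ^ (m + p) / (m - p)! := by
        rw [show (4 : ℝ) = 2 * 2 by norm_num, mul_pow]; ring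

lemma norm_legendreFourier_mul_le_max (m n : ℕ) (hap : a ≤ p) (hbp : b ≤ p) (hc : 1 ≤ c)
    (hs : |s| ≤ c) (ht : |t| ≤ c) :
    ‖legendreFourier m a s‖ * ‖legendreFourier n b t‖ ≤
      4 ^ (p + 1) * (c / 2) ^ (max m n + p) / (max m n - p)! := by
  rcases le_total n m with h | h
  · rw [max_eq_left h]
    exact norm_legendreFourier_mul_le_left m n b t hap hc hs
  · rw [max_eq_right h, mul_comm]
    exact norm_legendreFourier_mul_le_left n m a s hbp hc ht

end LegendreFourier

section Fubini

lemma integral_integral_integral_mul {X Y Ω 𝕜 : Type*} [MeasurableSpace X] [MeasurableSpace Y]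
    [MeasurableSpace Ω] [RCLike 𝕜] {μ : Measure X} {ν : Measure Y} {κ : Measure Ω} [SFinite μ]
    [SFinite ν] [SFinite κ] {F : X → Ω → 𝕜} {G : Y → Ω → 𝕜}
    (h : Integrable (fun q : (X × Y) × Ω ↦ F q.1.1 q.2 * G q.1.2 q.2) ((μ.prod ν).prod κ)) :
    ∫ x, ∫ y, ∫ ω, F x ω * G y ω ∂κ ∂ν ∂μ = ∫ ω, (∫ x, F x ω ∂μ) * ∫ y, G y ω ∂ν ∂κ := by
  calc ∫ x, ∫ y, ∫ ω, F x ω * G y ω ∂κ ∂ν ∂μ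
      = ∫ z, ∫ ω, F z.1 ω * G z.2 ω ∂κ ∂(μ.prod ν) := integral_integral h.integral_prod_left
    _ = ∫ ω, ∫ z, F z.1 ω * G z.2 ω ∂(μ.prod ν) ∂κ := integral_integral_swap h
    _ = ∫ ω, (∫ x, F x ω ∂μ) * ∫ y, G y ω ∂ν ∂κ :=
        integral_congr_ae (ae_of_all _ fun ω ↦ integral_prod_mul (F · ω) (G · ω))

lemma integrableOn_Icc_prod_Icc {E : Type*} [NormedAddCommGroup E] {f : ℝ × ℝ → E} {a b c d : ℝ}
    (hf : Continuous f) : IntegrableOn f (Icc a b ×ˢ Icc c d) :=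
  hf.continuousOn.integrableOn_compact (isCompact_Icc.prod isCompact_Icc)

/-- The (unnormalised) coefficient of `φ` on `[-1, 1]²` with respect to `P_m ⊗ P_n`. -/
def legendreCoeff (m n : ℕ) (φ : ℝ × ℝ → ℂ) : ℂ :=
  ∫ x in Icc (-1 : ℝ) 1, ∫ y in Icc (-1 : ℝ) 1,
    φ (x, y) * (legendreP m x : ℂ) * (legendreP n y : ℂ)

/-- The function `(x, y)^α ∫ e^{i(ξ₁x + ξ₂y)} w(ξ) dμ(ξ)`: a summand of `φ`, with the complex
measure encoded as the density `w` times the positive measure `μ`. -/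
def monomialMulFourier (α : ℕ × ℕ) (μ : Measure (ℝ × ℝ)) (w : ℝ × ℝ → ℂ) (z : ℝ × ℝ) : ℂ :=
  (z.1 : ℂ) ^ α.1 * (z.2 : ℂ) ^ α.2 *
    ∫ ξ, Complex.exp (Complex.I * ((ξ.1 * z.1 + ξ.2 * z.2 : ℝ) : ℂ)) * w ξ ∂μ

lemma legendreCoeff_eq_setIntegral_prod (m n : ℕ) {φ : ℝ × ℝ → ℂ} (hφ : Continuous φ) :
    legendreCoeff m n φ = ∫ z in Icc (-1 : ℝ) 1 ×ˢ Icc (-1 : ℝ) 1,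
      φ z * (legendreP m z.1 : ℂ) * (legendreP n z.2 : ℂ) :=
  (setIntegral_prod (fun z ↦ φ z * (legendreP m z.1 : ℂ) * (legendreP n z.2 : ℂ))
    (integrableOn_Icc_prod_Icc (by fun_prop))).symm

lemma legendreCoeff_sum (m n : ℕ) {ι : Type*} {s : Finset ι} {F : ι → ℝ × ℝ → ℂ}
    (hF : ∀ i ∈ s, Continuous (F i)) :
    legendreCoeff m n (fun z ↦ ∑ i ∈ s, F i z) = ∑ i ∈ s, legendreCoeff m n (F i) := by
  rw [legendreCoeff_eq_setIntegral_prod m n (continuous_finsetSum s hF),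
    Finset.sum_congr rfl fun i hi ↦ legendreCoeff_eq_setIntegral_prod m n (hF i hi)]
  simp only [Finset.sum_mul]
  refine integral_finsetSum s fun i hi ↦ ?_
  have := hF i hi
  exact integrableOn_Icc_prod_Icc (by fun_prop)

variable {μ : Measure (ℝ × ℝ)} {w : ℝ × ℝ → ℂ}

lemma continuous_monomialMulFourier (α : ℕ × ℕ) (hw : Integrable w μ) :
    Continuous (monomialMulFourier α μ w) := by
  have : Continuous fun z : ℝ × ℝ ↦
      ∫ ξ, Complex.exp (Complex.I * ((ξ.1 * z.1 + ξ.2 * z.2 : ℝ) : ℂ)) * w ξ ∂μ := by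
    refine continuous_of_dominated (bound := fun ξ ↦ ‖w ξ‖) (fun z ↦ ?_) (fun z ↦ ?_) hw.norm ?_
    · exact (Continuous.aestronglyMeasurable (by fun_prop)).mul hw.aestronglyMeasurable
    · exact ae_of_all _ fun ξ ↦ by rw [norm_mul, Complex.norm_exp_I_mul_ofReal, one_mul]
    · exact ae_of_all _ fun ξ ↦ by fun_prop
  unfold monomialMulFourier
  fun_prop

lemma legendreKernel_mul_legendreKernel (m n : ℕ) (α : ℕ × ℕ) (z ξ : ℝ × ℝ) :
    legendreKernel m α.1 ξ.1 z.1 * legendreKernel n α.2 ξ.2 z.2 =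
      (z.1 ^ α.1 * z.2 ^ α.2 * legendreP m z.1 * legendreP n z.2 : ℂ) *
        Complex.exp (Complex.I * ((ξ.1 * z.1 + ξ.2 * z.2 : ℝ) : ℂ)) := by
  simp only [legendreKernel, Complex.real_smul]
  push_cast
  rw [mul_add, Complex.exp_add, mul_assoc Complex.I, mul_assoc Complex.I]
  ring

lemma integrable_legendreKernel_mul [SFinite μ] (m n : ℕ) (α : ℕ × ℕ) (hw : Integrable w μ) :
    Integrable (fun q : (ℝ × ℝ) × ℝ × ℝ ↦
        legendreKernel m α.1 q.2.1 q.1.1 * (legendreKernel n α.2 q.2.2 q.1.2 * w q.2))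
      (((volume.restrict (Icc (-1) 1)).prod (volume.restrict (Icc (-1) 1))).prod μ) := by
  have polynomial : Integrable (fun z : ℝ × ℝ ↦
      (z.1 ^ α.1 * z.2 ^ α.2 * legendreP m z.1 * legendreP n z.2 : ℂ))
      ((volume.restrict (Icc (-1) 1)).prod (volume.restrict (Icc (-1) 1))) := by
    rw [Measure.prod_restrict]
    exact integrableOn_Icc_prod_Icc (by fun_prop)
  refine ((polynomial.mul_prod hw).bdd_mul (c := 1)
    (f := fun q ↦ Complex.exp (Complex.I * ((q.2.1 * q.1.1 + q.2.2 * q.1.2 : ℝ) : ℂ)))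
    (Continuous.aestronglyMeasurable (by fun_prop))
    (ae_of_all _ fun q ↦ (Complex.norm_exp_I_mul_ofReal _).le)).congr (ae_of_all _ fun q ↦ ?_)
  simp only [← mul_assoc, legendreKernel_mul_legendreKernel]
  ring

lemma legendreCoeff_monomialMulFourier [SFinite μ] (m n : ℕ) (α : ℕ × ℕ) (hw : Integrable w μ) :
    legendreCoeff m n (monomialMulFourier α μ w) =
      ∫ ξ, legendreFourier m α.1 ξ.1 * (legendreFourier n α.2 ξ.2 * w ξ) ∂μ := by
  have integrand_eq (x y : ℝ) :
      monomialMulFourier α μ w (x, y) * legendreP m x * legendreP n y =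
        ∫ ξ, legendreKernel m α.1 ξ.1 x * (legendreKernel n α.2 ξ.2 y * w ξ) ∂μ := by
    simp only [← mul_assoc, legendreKernel_mul_legendreKernel m n α (x, y)]
    simp only [mul_assoc, integral_const_mul, monomialMulFourier]
    ring
  have legendreFourier_eq (k a : ℕ) (t : ℝ) :
      legendreFourier k a t = ∫ x in Icc (-1 : ℝ) 1, legendreKernel k a t x := by
    rw [integral_Icc_eq_integral_Ioc, ← intervalIntegral.integral_of_le (by norm_num)]
    rfl
  simp only [legendreCoeff, integrand_eq]
  rw [integral_integral_integral_mul (integrable_legendreKernel_mul m n α hw)]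
  simp only [legendreFourier_eq, integral_mul_const]

lemma norm_legendreCoeff_monomialMulFourier_le [SFinite μ] {m n : ℕ} {α : ℕ × ℕ} {B : ℝ}
    (hw : Integrable w μ)
    (hB : ∀ᵐ ξ ∂μ, ‖legendreFourier m α.1 ξ.1‖ * ‖legendreFourier n α.2 ξ.2‖ ≤ B) :
    ‖legendreCoeff m n (monomialMulFourier α μ w)‖ ≤ B * ∫ ξ, ‖w ξ‖ ∂μ := by
  rw [legendreCoeff_monomialMulFourier m n α hw, ← integral_const_mul]
  refine norm_integral_le_of_norm_le (hw.norm.const_mul B) (hB.mono fun ξ hξ ↦ ?_)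
  rw [norm_mul, norm_mul, ← mul_assoc]
  gcongr

lemma norm_legendreCoeff_sum_monomialMulFourier_le {s : Finset (ℕ × ℕ)}
    {μ : ℕ × ℕ → Measure (ℝ × ℝ)} [∀ α, SFinite (μ α)] {w : ℕ × ℕ → ℝ × ℝ → ℂ} {m n : ℕ} {B M : ℝ}
    (hw : ∀ α ∈ s, Integrable (w α) (μ α)) (hM : ∀ α ∈ s, ∫ ξ, ‖w α ξ‖ ∂μ α ≤ M) (hB₀ : 0 ≤ B)
    (hB : ∀ α ∈ s, ∀ᵐ ξ ∂μ α,
      ‖legendreFourier m α.1 ξ.1‖ * ‖legendreFourier n α.2 ξ.2‖ ≤ B) :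
    ‖legendreCoeff m n fun z ↦ ∑ α ∈ s, monomialMulFourier α (μ α) (w α) z‖ ≤ #s * (B * M) := by
  rw [legendreCoeff_sum m n fun α hα ↦ continuous_monomialMulFourier α (hw α hα), ← nsmul_eq_mul]
  refine norm_sum_le_of_le s (fun α hα ↦ ?_) |>.trans_eq (Finset.sum_const (B * M))
  exact (norm_legendreCoeff_monomialMulFourier_le (hw α hα) (hB α hα)).trans
    (mul_le_mul_of_nonneg_left (hM α hα) hB₀)

end Fubini

lemma Gamma_natCast_sub_add_one {p n : ℕ} (h : p ≤ n) :
    Gamma ((n : ℝ) - p + 1) = (n - p).factorial := by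
  rw [← Nat.cast_sub h, Gamma_nat_eq_factorial]

/-- Decay of the Legendre coefficients of a function of the form
`φ(x,y) = ∑_{|α| ≤ p} (x,y)^α ∫_{[-c,c]²} e^{i(ξ₁x+ξ₂y)} dμ_α(ξ)`, where each complex
Radon measure `μ_α` on `[-c,c]²` is encoded by its polar decomposition `w_α · ν_α`
(so `|μ_α|([-c,c]²) = ν_α([-c,c]²)`), and `M = max_{|α| ≤ p} |μ_α|([-c,c]²)`. -/
theorem legendre_coefficient_decay (p : ℕ) :
    ∃ C : ℝ, ∀ c : ℝ, 1 ≤ c →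
      ∀ (ν : ℕ × ℕ → Measure (ℝ × ℝ)) (w : ℕ × ℕ → (ℝ × ℝ) → ℂ),
        (∀ α, IsFiniteMeasure (ν α)) →
        (∀ α, ν α (Set.Icc ((-c, -c) : ℝ × ℝ) ((c, c) : ℝ × ℝ))ᶜ = 0) →
        (∀ α, Measurable (w α)) →
        (∀ α ξ, ‖w α ξ‖ = 1) →
        ∀ φ : ℝ × ℝ → ℂ,
        (∀ z : ℝ × ℝ, φ z =
          ∑ α ∈ multiIdx p,
            (z.1 : ℂ) ^ α.1 * (z.2 : ℂ) ^ α.2 *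
              ∫ ξ in Set.Icc ((-c, -c) : ℝ × ℝ) ((c, c) : ℝ × ℝ),
                Complex.exp (Complex.I * ((ξ.1 * z.1 + ξ.2 * z.2 : ℝ) : ℂ)) * w α ξ ∂(ν α)) →
        ∀ M : ℝ,
        IsGreatest {r : ℝ | ∃ α ∈ multiIdx p,
          r = ((ν α) (Set.Icc ((-c, -c) : ℝ × ℝ) ((c, c) : ℝ × ℝ))).toReal} M →
        ∀ m n : ℕ,
          (p ≤ min m n →
            ‖∫ x in Set.Icc (-1 : ℝ) 1, ∫ y in Set.Icc (-1 : ℝ) 1,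
                φ (x, y) * (legendreP m x : ℂ) * (legendreP n y : ℂ)‖ ≤
              C * M * (c / 2) ^ (m + n + p) /
                (Real.Gamma ((m : ℝ) - p + 1) * Real.Gamma ((n : ℝ) - p + 1))) ∧
          (p ≤ max m n →
            ‖∫ x in Set.Icc (-1 : ℝ) 1, ∫ y in Set.Icc (-1 : ℝ) 1,
                φ (x, y) * (legendreP m x : ℂ) * (legendreP n y : ℂ)‖ ≤
              C * M * (c / 2) ^ (max m n + p) / Real.Gamma ((max m n : ℝ) - p + 1)) := by
  refine ⟨#(multiIdx p) * 4 ^ (p + 1), fun c hc ν w _ _ hw hw1 φ hφ M hM m n ↦ ?_⟩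
  have hw_int (α : ℕ × ℕ) : IntegrableOn (w α) (Icc (-c, -c) (c, c)) (ν α) :=
    .of_bound (measure_lt_top _ _) (hw α).aestronglyMeasurable 1 (ae_of_all _ fun ξ ↦ (hw1 α ξ).le)
  have variation_le : ∀ α ∈ multiIdx p, ∫ ξ in Icc (-c, -c) (c, c), ‖w α ξ‖ ∂ν α ≤ M :=
    fun α hα ↦ by simpa [hw1, measureReal_def] using hM.2 ⟨α, hα, rfl⟩
  have coeff_le {B : ℝ} (hB₀ : 0 ≤ B) (hB : ∀ α ∈ multiIdx p, ∀ s t : ℝ, |s| ≤ c → |t| ≤ c →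
      ‖legendreFourier m α.1 s‖ * ‖legendreFourier n α.2 t‖ ≤ B) :
      ‖legendreCoeff m n φ‖ ≤ #(multiIdx p) * (B * M) := by
    rw [funext hφ]
    refine norm_legendreCoeff_sum_monomialMulFourier_le (fun α _ ↦ hw_int α) variation_le hB₀
      fun α hα ↦ ae_restrict_of_forall_mem measurableSet_Icc fun ξ hξ ↦ ?_
    exact hB α hα _ _ (abs_le.2 ⟨hξ.1.1, hξ.2.1⟩) (abs_le.2 ⟨hξ.1.2, hξ.2.2⟩)
  have degree_le {α : ℕ × ℕ} (hα : α ∈ multiIdx p) : α.1 + α.2 ≤ p := (Finset.mem_filter.1 hα).2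
  refine ⟨fun hp ↦ ?_, fun hp ↦ ?_⟩
  · obtain ⟨hm, hn⟩ := le_min_iff.1 hp
    rw [Gamma_natCast_sub_add_one hm, Gamma_natCast_sub_add_one hn]
    exact (coeff_le (by positivity) fun α hα s t ↦
      norm_legendreFourier_mul_le m n (degree_le hα) hc).trans_eq (by ring)
  · rw [← Nat.cast_max, Gamma_natCast_sub_add_one hp]
    exact (coeff_le (by positivity) fun α hα s t ↦
      norm_legendreFourier_mul_le_max m n (le_of_add_le_left (degree_le hα))
        (le_of_add_le_right (degree_le hα)) hc).trans_eq (by ring)
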